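/- arXiv:math/0606728 — 2 statements merged into one kernel-verified Lean document; each statement's English description precedes it below -/
import Mathlib

section
/- A finite poset P is an initial segment of a finite upper semilattice if and only if there do not exist incomparable elements x0, x1 ∈ P together with two incomparable elements y0, y1 ∈ P such that y0 and y1 are both minimal upper bounds of {x0, x1} in P. -/
/-- `x` is a nonzero join-irreducible element (relative to the least element `z`):
`x ≠ z` and whenever `x = u ⊔ v` then `x = u` or `x = v`. -/
def JoinIrredAbove {D : Type*} [Lattice D] (z x : D) : Prop :=
  x ≠ z ∧ ∀ u v : D, x = u ⊔ v → x = u ∨ x = v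

/-- A finite distributive lattice is double diamond-like if it has at least two
elements, its poset of nonzero join-irreducible elements has no greatest and no
least element, and its least element is not the meet of two nonzero
join-irreducible elements one of which is maximal among them. -/
def DoubleDiamondLike (D : Type*) [DistribLattice D] [Fintype D] : Prop :=
  Nontrivial D ∧ ∃ z : D, IsBot z ∧
    ¬ (∃ m, JoinIrredAbove z m ∧ ∀ x, JoinIrredAbove z x → x ≤ m) ∧
    ¬ (∃ m, JoinIrredAbove z m ∧ ∀ x, JoinIrredAbove z x → m ≤ x) ∧
    ¬ (∃ x y, JoinIrredAbove z x ∧ JoinIrredAbove z y ∧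
        (∀ w, JoinIrredAbove z w → y ≤ w → y = w) ∧ z = x ⊓ y)

/-- `L` contains a double diamond-like lattice as a subinterval: some interval
`[a,b]` of `L` (with its induced order) is isomorphic to a finite distributive
double diamond-like lattice. -/
def HasDoubleDiamondSubinterval (L : Type*) [Lattice L] : Prop :=
  ∃ a b : L, a ≤ b ∧ ∃ (D : Type) (_ : DistribLattice D) (_ : Fintype D),
    DoubleDiamondLike D ∧ Nonempty (Set.Icc a b ≃o D)

/-- A poset `P` is an initial segment of a finite upper semilattice: there is an
order embedding of `P` into a finite join-semilattice with downward closed image. -/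
def IsInitialSegmentOfFiniteUpperSemilattice (P : Type*) [PartialOrder P] : Prop :=
  ∃ (S : Type) (_ : SemilatticeSup S) (_ : Fintype S) (e : P ↪o S),
    IsLowerSet (Set.range e)

/-- `y` is a minimal upper bound of `{x0, x1}`. -/
def IsMinimalUpperBound {P : Type*} [PartialOrder P] (x0 x1 y : P) : Prop :=
  x0 ≤ y ∧ x1 ≤ y ∧ ∀ z, z < y → ¬ (x0 ≤ z ∧ x1 ≤ z)

/-!
Inside an upper semilattice, the join of two elements of a lower set stays in the lower set as soon
as the two elements have an upper bound there. Hence an initial segment of an upper semilattice is a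
poset in which every pair bounded above has a least upper bound; conversely, adjoining a top element
to such a poset supplies the missing joins. When every upper bound lies above a minimal one, as in a
finite poset, a pair bounded above has a least upper bound exactly when it has only one minimal
upper bound.
-/

section MinimalUpperBounds

variable {P : Type*} [PartialOrder P] {a b c y : P}

theorem isMinimalUpperBound_iff_minimal :
    IsMinimalUpperBound a b y ↔ Minimal (· ∈ upperBounds {a, b}) y := by
  simp only [IsMinimalUpperBound, minimal_iff_forall_lt, upperBounds_insert,
    upperBounds_singleton, Set.mem_inter_iff, Set.mem_Ici, and_assoc]

theorem exists_isMinimalUpperBound_le [WellFoundedLT P] (hc : c ∈ upperBounds {a, b}) :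
    ∃ y ≤ c, IsMinimalUpperBound a b y := by
  simpa only [isMinimalUpperBound_iff_minimal] using
    exists_minimal_le_of_wellFoundedLT (· ∈ upperBounds {a, b}) c hc

namespace IsMinimalUpperBound

theorem mem_upperBounds (hy : IsMinimalUpperBound a b y) : y ∈ upperBounds {a, b} :=
  (isMinimalUpperBound_iff_minimal.1 hy).prop

theorem eq_of_le (hy : IsMinimalUpperBound a b y) (hc : c ∈ upperBounds {a, b})
    (hcy : c ≤ y) : c = y :=
  (isMinimalUpperBound_iff_minimal.1 hy).eq_of_le hc hcy

theorem eq_of_isLUB (hy : IsMinimalUpperBound a b y) (hc : IsLUB {a, b} c) : c = y :=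
  hy.eq_of_le hc.1 (hc.2 hy.mem_upperBounds)

end IsMinimalUpperBound

end MinimalUpperBounds

/-- Every pair of elements that is bounded above has a least upper bound: the intrinsic property
that characterizes the lower sets of upper semilattices. -/
def HasBoundedPairSups (P : Type*) [Preorder P] : Prop :=
  ∀ a b : P, BddAbove {a, b} → ∃ c, IsLUB {a, b} c

namespace HasBoundedPairSups

theorem of_semilatticeSup (S : Type*) [SemilatticeSup S] : HasBoundedPairSups S :=
  fun a b _ => ⟨a ⊔ b, isLUB_pair⟩

section Preorder

variable {P S : Type*} [Preorder P] [Preorder S]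

theorem of_incomparable
    (h : ∀ a b : P, ¬a ≤ b → ¬b ≤ a → BddAbove {a, b} → ∃ c, IsLUB {a, b} c) :
    HasBoundedPairSups P := by
  intro a b hbdd
  by_cases hab : a ≤ b
  · exact ⟨b, IsGreatest.isLUB ⟨by simp, by simpa using hab⟩⟩
  by_cases hba : b ≤ a
  · exact ⟨a, IsGreatest.isLUB ⟨by simp, by simpa using hba⟩⟩
  exact h a b hab hba hbdd

theorem of_isLowerSet_range (hS : HasBoundedPairSups S) (e : P ↪o S)
    (he : IsLowerSet (Set.range e)) : HasBoundedPairSups P := by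
  rintro a b ⟨w, hw⟩
  have hew : e w ∈ upperBounds {e a, e b} := by
    simpa [upperBounds_insert] using hw
  obtain ⟨s, hs⟩ := hS (e a) (e b) ⟨e w, hew⟩
  obtain ⟨c, rfl⟩ := he (hs.2 hew) ⟨w, rfl⟩
  rw [← Set.image_pair] at hs
  exact ⟨c, IsLUB.of_image e.le_iff_le hs⟩

theorem withTop (h : HasBoundedPairSups P) : HasBoundedPairSups (WithTop P) := by
  refine of_incomparable fun a b hab hba _ => ?_
  lift a to P using fun ha => hba (ha ▸ le_top)
  lift b to P using fun hb => hab (hb ▸ le_top)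
  by_cases hbdd : BddAbove {a, b}
  · obtain ⟨c, hc⟩ := h a b hbdd
    refine ⟨c, by simpa [upperBounds_insert] using hc.1, fun d hd => ?_⟩
    cases d with
    | top => exact le_top
    | coe d => exact WithTop.coe_le_coe.2 (hc.2 (by simpa [upperBounds_insert] using hd))
  · refine ⟨⊤, by simp [upperBounds_insert], fun d hd => ?_⟩
    cases d with
    | top => exact le_rfl
    | coe d => exact absurd ⟨d, by simpa [upperBounds_insert] using hd⟩ hbdd

end Preorder

section PartialOrder

variable {P : Type*} [PartialOrder P]

theorem isInitialSegmentOfFiniteUpperSemilattice [Finite P] (h : HasBoundedPairSups P) :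
    IsInitialSegmentOfFiniteUpperSemilattice P := by
  -- `P` may live in any universe, whereas the semilattice has to be a `Type`.
  let f : WithTop P ≃o Shrink.{0} (WithTop P) := orderIsoShrink _
  have hS : HasBoundedPairSups (Shrink.{0} (WithTop P)) :=
    h.withTop.of_isLowerSet_range f.symm.toOrderEmbedding (by simpa using isLowerSet_univ)
  choose sup hsup using fun a b => hS a b (OrderTop.bddAbove _)
  refine ⟨_, SemilatticeSup.ofIsLUB sup hsup, Fintype.ofFinite _,
    WithTop.coeOrderHom.trans f.toOrderEmbedding, ?_⟩
  have hrange : Set.range (WithTop.coeOrderHom.trans f.toOrderEmbedding) =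
      f '' Set.Iio (⊤ : WithTop P) := by
    rw [← WithTop.range_coe, ← Set.range_comp]
    rfl
  exact hrange ▸ (isLowerSet_Iio ⊤).image f

theorem iff_no_two_minimal_upper_bounds [WellFoundedLT P] :
    HasBoundedPairSups P ↔
    ¬ ∃ x0 x1 y0 y1 : P, (¬ x0 ≤ x1 ∧ ¬ x1 ≤ x0) ∧ (¬ y0 ≤ y1 ∧ ¬ y1 ≤ y0) ∧
      IsMinimalUpperBound x0 x1 y0 ∧ IsMinimalUpperBound x0 x1 y1 := by
  constructor
  · rintro h ⟨x0, x1, y0, y1, -, ⟨hy, -⟩, hy0, hy1⟩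
    obtain ⟨c, hc⟩ := h x0 x1 ⟨y0, hy0.mem_upperBounds⟩
    exact hy ((hy0.eq_of_isLUB hc).symm.trans (hy1.eq_of_isLUB hc)).le
  · refine fun h => of_incomparable fun a b hab hba ⟨w, hw⟩ => ?_
    obtain ⟨y, -, hy⟩ := exists_isMinimalUpperBound_le hw
    refine ⟨y, hy.mem_upperBounds, fun z hz => ?_⟩
    obtain ⟨y', hy'z, hy'⟩ := exists_isMinimalUpperBound_le hz
    have hyy' : y ≤ y' := by
      by_contra hn
      have hn' : ¬y' ≤ y := fun hle => hn (hy.eq_of_le hy'.mem_upperBounds hle).ge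
      exact h ⟨a, b, y, y', ⟨hab, hba⟩, ⟨hn, hn'⟩, hy, hy'⟩
    exact hyy'.trans hy'z

end PartialOrder

end HasBoundedPairSups

theorem isInitialSegmentOfFiniteUpperSemilattice_iff_hasBoundedPairSups {P : Type*}
    [PartialOrder P] :
    IsInitialSegmentOfFiniteUpperSemilattice P ↔ Finite P ∧ HasBoundedPairSups P := by
  constructor
  · rintro ⟨S, _, _, e, he⟩
    exact ⟨Finite.of_injective e e.injective,
      (HasBoundedPairSups.of_semilatticeSup S).of_isLowerSet_range e he⟩
  · rintro ⟨_, h⟩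
    exact h.isInitialSegmentOfFiniteUpperSemilattice

theorem initial_segment_iff_no_two_minimal_upper_bounds_general (P : Type*) [PartialOrder P] :
    IsInitialSegmentOfFiniteUpperSemilattice P ↔
    Finite P ∧
    ¬ ∃ x0 x1 y0 y1 : P, (¬ x0 ≤ x1 ∧ ¬ x1 ≤ x0) ∧ (¬ y0 ≤ y1 ∧ ¬ y1 ≤ y0) ∧
      IsMinimalUpperBound x0 x1 y0 ∧ IsMinimalUpperBound x0 x1 y1 := by
  rw [isInitialSegmentOfFiniteUpperSemilattice_iff_hasBoundedPairSups]
  exact and_congr_right fun _ => HasBoundedPairSups.iff_no_two_minimal_upper_bounds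

/-- A finite poset is an initial segment of a finite upper semilattice iff it
contains no two incomparable elements with two incomparable minimal upper
bounds. -/
theorem initial_segment_iff_no_two_minimal_upper_bounds (P : Type)
    [PartialOrder P] [Fintype P] :
    IsInitialSegmentOfFiniteUpperSemilattice P ↔
    ¬ ∃ x0 x1 y0 y1 : P, (¬ x0 ≤ x1 ∧ ¬ x1 ≤ x0) ∧ (¬ y0 ≤ y1 ∧ ¬ y1 ≤ y0) ∧
      IsMinimalUpperBound x0 x1 y0 ∧ IsMinimalUpperBound x0 x1 y1 := by
  rw [initial_segment_iff_no_two_minimal_upper_bounds_general]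
  exact and_iff_right inferInstance
end

section
/- Let L be a finite distributive lattice, let a ≤ b in L, and let x0, x1, y0, y1 be nonzero join-irreducible elements of the interval [a,b] (i.e., each is > a and is join-irreducible in the lattice [a,b]) such that x0 and x1 are incomparable, y0 and y1 are incomparable, x0 ≤ y0, x1 ≤ y0, and x0 ≤ y1. If y0 = z ⊔ w for some incomparable z, w ∈ L, then there exist incomparable z0, z1 ∈ L with y0 = z0 ⊔ z1, z0 ⊓ x0 ≠ z0 ⊓ x1, and ¬(z0 ≤ y1). -/
/-- `x` is a nonzero join-irreducible element of the interval `[a,b]`. -/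
def IccJoinIrred {L : Type*} [Lattice L] (a b x : L) : Prop :=
  x ∈ Set.Icc a b ∧ x ≠ a ∧
    ∀ u v : L, u ∈ Set.Icc a b → v ∈ Set.Icc a b → x = u ⊔ v → x = u ∨ x = v

/-!
If `y` is join-irreducible in `[a, b]` and `y = z ⊔ w`, then `y = (z ⊔ a) ⊔ (w ⊔ a)` is a join
inside `[a, b]`, so `y = c ⊔ a` for `c = z` or `c = w`. By the diamond isomorphism theorem for
modular lattices, `c ⊓ ·` is then injective on `[a, y] = [a, c ⊔ a]`, so it separates `x0` from
`x1`. Hence `y = c ⊔ a` is a splitting of the required kind.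
-/

theorem injOn_inf_Icc_sup {L : Type*} [Lattice L] [IsModularLattice L] (c a : L) :
    Set.InjOn (c ⊓ ·) (Set.Icc a (c ⊔ a)) := fun x hx y hy hxy =>
  congrArg Subtype.val <|
    (infIccOrderIsoIccSup c a).symm.injective (a₁ := ⟨x, hx⟩) (a₂ := ⟨y, hy⟩) (Subtype.ext hxy)

theorem IccJoinIrred.eq_sup_or_eq_sup_of_eq_sup {L : Type*} [Lattice L] {a b y z w : L}
    (hy : IccJoinIrred a b y) (hsplit : y = z ⊔ w) : y = z ⊔ a ∨ y = w ⊔ a := by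
  obtain ⟨⟨hay, hyb⟩, -, hirr⟩ := hy
  have hz : z ≤ y := hsplit ▸ le_sup_left
  have hw : w ≤ y := hsplit ▸ le_sup_right
  have hjoin : y = (z ⊔ a) ⊔ (w ⊔ a) := by
    rw [← sup_sup_distrib_right, ← hsplit, sup_eq_left.2 hay]
  exact hirr _ _ ⟨le_sup_right, (sup_le hz hay).trans hyb⟩
    ⟨le_sup_right, (sup_le hw hay).trans hyb⟩ hjoin

theorem IccJoinIrred.exists_incomparable_sup_eq {L : Type*} [Lattice L] {a b y z w : L}
    (hy : IccJoinIrred a b y) (hzw : ¬ z ≤ w ∧ ¬ w ≤ z) (hsplit : y = z ⊔ w) :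
    ∃ c : L, (¬ c ≤ a ∧ ¬ a ≤ c) ∧ y = c ⊔ a := by
  have incomparable {c : L} (hc : y = c ⊔ a) (hyc : ¬ y ≤ c) : ¬ c ≤ a ∧ ¬ a ≤ c :=
    ⟨fun hca => hy.2.1 (hc.trans (sup_eq_right.2 hca)),
      fun hac => hyc (hc.trans (sup_eq_left.2 hac)).le⟩
  have hyz : ¬ y ≤ z := fun h => hzw.2 (le_sup_right.trans (hsplit.ge.trans h))
  have hyw : ¬ y ≤ w := fun h => hzw.1 (le_sup_left.trans (hsplit.ge.trans h))
  rcases hy.eq_sup_or_eq_sup_of_eq_sup hsplit with hz | hw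
  · exact ⟨z, incomparable hz hyz, hz⟩
  · exact ⟨w, incomparable hw hyw, hw⟩

theorem splitting_lemma_general {L : Type*} [Lattice L] [IsModularLattice L] {a b y z w : L}
    (hy : IccJoinIrred a b y) (hzw : ¬ z ≤ w ∧ ¬ w ≤ z) (hsplit : y = z ⊔ w) :
    ∃ c : L, (¬ c ≤ a ∧ ¬ a ≤ c) ∧ y = c ⊔ a ∧ Set.InjOn (c ⊓ ·) (Set.Icc a y) := by
  obtain ⟨c, hca, rfl⟩ := hy.exists_incomparable_sup_eq hzw hsplit
  exact ⟨c, hca, rfl, injOn_inf_Icc_sup c a⟩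

/-- The auxiliary splitting lemma: if `y0` splits as a join of two incomparable
elements of `L`, then the splitting can be chosen with `z0 ⊓ x0 ≠ z0 ⊓ x1` and
`¬(z0 ≤ y1)`. -/
theorem splitting_lemma (L : Type) [DistribLattice L] [Fintype L]
    (a b : L) (hab : a ≤ b) (x0 x1 y0 y1 : L)
    (hx0 : IccJoinIrred a b x0) (hx1 : IccJoinIrred a b x1)
    (hy0 : IccJoinIrred a b y0) (hy1 : IccJoinIrred a b y1)
    (hx : ¬ x0 ≤ x1 ∧ ¬ x1 ≤ x0) (hy : ¬ y0 ≤ y1 ∧ ¬ y1 ≤ y0)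
    (h00 : x0 ≤ y0) (h10 : x1 ≤ y0) (h01 : x0 ≤ y1)
    (z w : L) (hzw : ¬ z ≤ w ∧ ¬ w ≤ z) (hsplit : y0 = z ⊔ w) :
    ∃ z0 z1 : L, (¬ z0 ≤ z1 ∧ ¬ z1 ≤ z0) ∧ y0 = z0 ⊔ z1 ∧
      z0 ⊓ x0 ≠ z0 ⊓ x1 ∧ ¬ z0 ≤ y1 := by
  obtain ⟨c, hca, hsup, hinj⟩ := splitting_lemma_general hy0 hzw hsplit
  exact ⟨c, a, hca, hsup, hinj.ne ⟨hx0.1.1, h00⟩ ⟨hx1.1.1, h10⟩ fun h => hx.1 h.le,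
    fun hcy => hy.1 (hsup.trans_le (sup_le hcy hy1.1.1))⟩
end
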